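/- arXiv:1301.4206 — 2 statements merged into one kernel-verified Lean document; each statement's English description precedes it below -/
import Mathlib

section
/- Let G be a finite undirected multigraph, let v₁,...,v_k be (not necessarily pairwise distinct) vertices all belonging to the same k-edge-connected equivalence class, and let u be a vertex. If there exist k pairwise edge-disjoint ttrails connecting u to the vertices v₁,...,v_k (the i-th ttrail going from u to v_i), then u is k-edge-connected to v₁. -/
open Finset

/-- A finite undirected multigraph: each edge `e : E` has an unordered pair of
endpoints `ends e : Sym2 V`.  Loops and parallel edges are allowed and the graph
need not be connected. -/
structure Multigraph (V E : Type*) where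
  ends : E → Sym2 V

namespace Multigraph

variable {V E : Type*}

/-- `G.IsChain x y p` : `p` is an alternating sequence `v₁,e₁,…,vₙ,eₙ` (encoded as a
list of vertex-edge pairs) which forms a walk from `x` to `y` (the final vertex `y`
is omitted, i.e. this is "truncated"). -/
def IsChain (G : Multigraph V E) : V → V → List (V × E) → Prop
  | x, y, [] => x = y
  | x, y, (v, e) :: rest => v = x ∧ ∃ w, G.ends e = s(x, w) ∧ G.IsChain w y rest

/-- A truncated trail (ttrail) from `x` to `y`: an alternating walk with no repeated
edges, final vertex omitted. -/
def IsTtrail (G : Multigraph V E) (x y : V) (p : List (V × E)) : Prop :=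
  G.IsChain x y p ∧ (p.map Prod.snd).Nodup

/-- A cycle: a closed ttrail with no repeated vertices. -/
def IsCycle (G : Multigraph V E) (x : V) (p : List (V × E)) : Prop :=
  G.IsTtrail x x p ∧ (p.map Prod.fst).Nodup

/-- Two ttrails are edge-disjoint if they have no common edges. -/
def EdgeDisjoint (p q : List (V × E)) : Prop :=
  ∀ e, e ∈ p.map Prod.snd → e ∉ q.map Prod.snd

/-- `k`-edge-connectivity: two distinct vertices are `k`-edge-connected if there are
`k` pairwise edge-disjoint ttrails between them; every vertex is `k`-edge-connected
to itself. -/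
def KConn (G : Multigraph V E) (k : ℕ) (v w : V) : Prop :=
  v = w ∨ ∃ p : Fin k → List (V × E),
    (∀ i, G.IsTtrail v w (p i)) ∧ ∀ i j, i ≠ j → EdgeDisjoint (p i) (p j)

/-- `conk G k` : the number of equivalence classes of `k`-edge-connected vertices. -/
noncomputable def conk (G : Multigraph V E) (k : ℕ) : ℕ :=
  Nat.card (Quotient (Relation.EqvGen.setoid (G.KConn k)))

/-- The number of connected components of `G`. -/
noncomputable def con (G : Multigraph V E) : ℕ := G.conk 1

section Homology

variable [Fintype V] [Fintype E] [DecidableEq V] [DecidableEq E]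

/-- The vector in `F₂^V` which is the sum of the two endpoints of the edge `e`
(so a loop is sent to `0`). -/
def edgeVec (G : Multigraph V E) (e : E) : V → ZMod 2 := fun v =>
  Sym2.lift ⟨fun a b => (if v = a then (1 : ZMod 2) else 0) + (if v = b then 1 else 0),
    fun _ _ => add_comm _ _⟩ (G.ends e)

/-- The boundary map `δ : F₂^E → F₂^V`, sending each edge to the sum of its two
adjacent vertices. -/
def boundary (G : Multigraph V E) : (E → ZMod 2) →ₗ[ZMod 2] (V → ZMod 2) where
  toFun c := fun v => ∑ e, c e * G.edgeVec e v
  map_add' c d := by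
    funext v
    simp [add_mul, Finset.sum_add_distrib]
  map_smul' r c := by
    funext v
    simp [Finset.mul_sum, mul_assoc]

/-- The Cycle Space of `G` : the kernel of the boundary map. -/
def cycleSpace (G : Multigraph V E) : Submodule (ZMod 2) (E → ZMod 2) :=
  LinearMap.ker G.boundary

/-- The indicator vector of a vertex in `F₂^V`. -/
def vert (v : V) : V → ZMod 2 := fun w => if w = v then 1 else 0

/-- A `k`-weak homological cycle: a homological path between two `k`-edge-connected
vertices. -/
def IsWeakCycle (G : Multigraph V E) (k : ℕ) (c : E → ZMod 2) : Prop :=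
  ∃ v w, G.KConn k v w ∧ G.boundary c = vert v + vert w

/-- The `k`-Weak Cycle Space: the span of all `k`-weak homological cycles. -/
def weakCycleSpace (G : Multigraph V E) (k : ℕ) : Submodule (ZMod 2) (E → ZMod 2) :=
  Submodule.span (ZMod 2) {c | G.IsWeakCycle k c}

/-- `eps p` : the set of edges of the ttrail `p`, as a vector in `F₂^E`. -/
def eps (p : List (V × E)) : E → ZMod 2 := fun e => if e ∈ p.map Prod.snd then 1 else 0

/-- The `F₂`-linear extension of `f : E → A` to subsets of `E`: the sum of `f` over
the edges of the subset `S`. -/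
def fSum {A : Type*} [AddCommGroup A] (f : E → A) (S : E → ZMod 2) : A :=
  ∑ e ∈ Finset.univ.filter fun e => S e = 1, f e

end Homology

section Balanced

variable {A : Type*} [AddCommGroup A]

/-- The sum `g(v₁)+f(e₁)+…+g(vₙ)+f(eₙ)` of the values of a vertex-function `g` and an
edge-function `f` along a ttrail `v₁,e₁,…,vₙ,eₙ`. -/
def pathSum (g : V → A) (f : E → A) (p : List (V × E)) : A :=
  (p.map fun ve => g ve.1 + f ve.2).sum

/-- The sum `h(v₁)+h(e₁)+…+h(vₙ)+h(eₙ)` of the values of `h : V ∪ E → A` along a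
ttrail `v₁,e₁,…,vₙ,eₙ`. -/
def wSum (h : V ⊕ E → A) (p : List (V × E)) : A :=
  (p.map fun ve => h (Sum.inl ve.1) + h (Sum.inr ve.2)).sum

lemma pathSum_cons (g : V → A) (f : E → A) (a : V × E) (t : List (V × E)) :
    pathSum g f (a :: t) = (g a.1 + f a.2) + pathSum g f t := by
  simp [pathSum]

lemma pathSum_zero (p : List (V × E)) : pathSum (0 : V → A) (0 : E → A) p = 0 := by
  induction p with
  | nil => simp [pathSum]
  | cons a t ih => simp [pathSum_cons, ih]

lemma pathSum_add (g g' : V → A) (f f' : E → A) (p : List (V × E)) :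
    pathSum (g + g') (f + f') p = pathSum g f p + pathSum g' f' p := by
  induction p with
  | nil => simp [pathSum]
  | cons a t ih => simp only [pathSum_cons, Pi.add_apply, ih]; abel

lemma pathSum_neg (g : V → A) (f : E → A) (p : List (V × E)) :
    pathSum (-g) (-f) p = -pathSum g f p := by
  induction p with
  | nil => simp [pathSum]
  | cons a t ih => simp only [pathSum_cons, Pi.neg_apply, ih]; abel

lemma wSum_cons (h : V ⊕ E → A) (a : V × E) (t : List (V × E)) :
    wSum h (a :: t) = (h (Sum.inl a.1) + h (Sum.inr a.2)) + wSum h t := by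
  simp [wSum]

lemma wSum_zero (p : List (V × E)) : wSum (0 : V ⊕ E → A) p = 0 := by
  induction p with
  | nil => simp [wSum]
  | cons a t ih => simp [wSum_cons, ih]

lemma wSum_add (h h' : V ⊕ E → A) (p : List (V × E)) :
    wSum (h + h') p = wSum h p + wSum h' p := by
  induction p with
  | nil => simp [wSum]
  | cons a t ih => simp only [wSum_cons, Pi.add_apply, ih]; abel

lemma wSum_neg (h : V ⊕ E → A) (p : List (V × E)) :
    wSum (-h) p = -wSum h p := by
  induction p with
  | nil => simp [wSum]
  | cons a t ih => simp only [wSum_cons, Pi.neg_apply, ih]; abel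

/-- A function `f : E → A` is balanced if the sum of its values along every closed
ttrail of `G` is zero. -/
def BalancedE (G : Multigraph V E) (f : E → A) : Prop :=
  ∀ x p, G.IsTtrail x x p → pathSum (0 : V → A) f p = 0

/-- A function `g : V → A` is balanceable if some `f : E → A` balances it, i.e. the
sum of the values of `g` and `f` along every closed ttrail of `G` is zero. -/
def Balanceable (G : Multigraph V E) (g : V → A) : Prop :=
  ∃ f : E → A, ∀ x p, G.IsTtrail x x p → pathSum g f p = 0

/-- A function `h : V ∪ E → A` is balanced if the sum of its values along every
closed ttrail of `G` is zero. -/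
def BalancedW (G : Multigraph V E) (h : V ⊕ E → A) : Prop :=
  ∀ x p, G.IsTtrail x x p → wSum h p = 0

/-- `H(E,A)` : the group of balanced functions from `E` to `A`. -/
def Hgroup (G : Multigraph V E) (A : Type*) [AddCommGroup A] : AddSubgroup (E → A) where
  carrier := {f | G.BalancedE f}
  zero_mem' := fun _ p _ => pathSum_zero p
  add_mem' := by
    intro f f' hf hf' x p hp
    have h := pathSum_add (0 : V → A) 0 f f' p
    rw [add_zero] at h
    rw [h, hf x p hp, hf' x p hp, add_zero]
  neg_mem' := by
    intro f hf x p hp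
    have h := pathSum_neg (0 : V → A) f p
    rw [neg_zero] at h
    rw [h, hf x p hp, neg_zero]

/-- `B(V,A)` : the group of balanceable functions from `V` to `A`. -/
def Bgroup (G : Multigraph V E) (A : Type*) [AddCommGroup A] : AddSubgroup (V → A) where
  carrier := {g | G.Balanceable g}
  zero_mem' := ⟨0, fun _ p _ => pathSum_zero p⟩
  add_mem' := by
    rintro g g' ⟨f, hf⟩ ⟨f', hf'⟩
    exact ⟨f + f', fun x p hp => by rw [pathSum_add, hf x p hp, hf' x p hp, add_zero]⟩
  neg_mem' := by
    rintro g ⟨f, hf⟩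
    exact ⟨-f, fun x p hp => by rw [pathSum_neg, hf x p hp, neg_zero]⟩

/-- `W(V ∪ E, A)` : the group of balanced functions from `V ∪ E` to `A`. -/
def Wgroup (G : Multigraph V E) (A : Type*) [AddCommGroup A] : AddSubgroup (V ⊕ E → A) where
  carrier := {h | G.BalancedW h}
  zero_mem' := fun _ p _ => wSum_zero p
  add_mem' := by
    intro h h' hh hh' x p hp
    rw [wSum_add, hh x p hp, hh' x p hp, add_zero]
  neg_mem' := by
    intro h hh x p hp
    rw [wSum_neg, hh x p hp, neg_zero]

end Balanced

/-- A `3`-weakly closed ttrail (a ttrail between `3`-edge-connected vertices) which is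
short: no inner vertex is `3`-edge-connected to the initial vertex. -/
def ShortW (G : Multigraph V E) (x y : V) (p : List (V × E)) : Prop :=
  G.IsTtrail x y p ∧ G.KConn 3 x y ∧ ∀ v ∈ (p.map Prod.fst).tail, ¬ G.KConn 3 v x

/-- `G.ShortChain x y L` : `L` is a list of nontrivial short `3`-weakly closed ttrails
which concatenate into a ttrail from `x` to `y`. -/
def ShortChain (G : Multigraph V E) : V → V → List (List (V × E)) → Prop
  | x, y, [] => x = y
  | x, y, s :: rest => s ≠ [] ∧ ∃ z, G.ShortW x z s ∧ G.ShortChain z y rest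

/-- `A₂` : the subgroup of elements of order dividing `2` in `A`. -/
def torsion2 (A : Type*) [AddCommGroup A] : AddSubgroup A where
  carrier := {a | 2 • a = 0}
  zero_mem' := by simp
  add_mem' := by
    intro a b ha hb
    simp only [Set.mem_setOf_eq] at *
    rw [smul_add, ha, hb, add_zero]
  neg_mem' := by
    intro a ha
    simp only [Set.mem_setOf_eq] at *
    rw [smul_neg, ha, neg_zero]

/-- `2A` : the image of the doubling map `a ↦ 2a`. -/
def double2 (A : Type*) [AddCommGroup A] : AddSubgroup A where
  carrier := {b | ∃ a, b = 2 • a}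
  zero_mem' := ⟨0, by simp⟩
  add_mem' := by
    rintro a b ⟨x, rfl⟩ ⟨y, rfl⟩
    exact ⟨x + y, by rw [smul_add]⟩
  neg_mem' := by
    rintro a ⟨x, rfl⟩
    exact ⟨-x, by rw [smul_neg]⟩

end Multigraph

namespace Multigraph

variable {V E : Type*} [Fintype V] [Fintype E] [DecidableEq V] [DecidableEq E]

/-!
Edge version of Menger's theorem by max-flow min-cut: `x` and `y` are `k`-edge-connected iff every
vertex set containing `x` but not `y` is left by at least `k` edges. Given this, let `S` contain `u`
but not `v₁`. If `S` contains some `vᵢ`, it separates `vᵢ` from `v₁`, so at least `k` edges leave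
it; otherwise each of the `k` edge-disjoint ttrails from `u` leaves `S`, through distinct edges.

Flows are finitely supported integral chains with values in `{-1, 0, 1}`, relative to an arbitrary
reference orientation. A residual ttrail from `x` to `y` augments a flow; when there is none, the
vertices reachable from `x` form a cut saturated by the flow. Dually, a flow of positive value
contains a ttrail from `x` to `y` along which it runs, and removing such ttrails one at a time
decomposes the flow.
-/

section EdgeMenger

variable {V E : Type*}

/-- The edge cut of a vertex set `S`: the edges with one end in `S` and the other outside. -/
def cut (G : Multigraph V E) (S : Set V) : Set E :=
  {e | ∃ a ∈ S, ∃ b ∉ S, G.ends e = s(a, b)}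

section Chains

variable {G : Multigraph V E} {x y : V} {p : List (V × E)}

lemma IsChain.exists_mem_cut {S : Set V} (h : G.IsChain x y p) (hx : x ∈ S) (hy : y ∉ S) :
    ∃ e ∈ p.map Prod.snd, e ∈ G.cut S := by
  induction p generalizing x with
  | nil => exact absurd (h ▸ hx) hy
  | cons s p ih =>
    obtain ⟨-, w, he, hw⟩ := h
    by_cases hwS : w ∈ S
    · obtain ⟨e, hep, heS⟩ := ih hw hwS
      exact ⟨e, List.mem_cons_of_mem _ hep, heS⟩
    · exact ⟨s.2, List.mem_cons_self, x, hx, w, hwS, he⟩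

lemma IsChain.of_append {q : List (V × E)} (h : G.IsChain x y (p ++ q)) :
    ∃ z, G.IsChain z y q := by
  induction p generalizing x with
  | nil => exact ⟨x, h⟩
  | cons s p ih =>
    obtain ⟨-, w, -, hw⟩ := h
    exact ih hw

theorem card_le_encard_cut {ι : Type*} {S : Set V} {x y : ι → V} {p : ι → List (V × E)}
    (hp : ∀ i, G.IsChain (x i) (y i) (p i)) (hdisj : Pairwise fun i j => EdgeDisjoint (p i) (p j))
    (hx : ∀ i, x i ∈ S) (hy : ∀ i, y i ∉ S) : ENat.card ι ≤ (G.cut S).encard := by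
  choose c hcp hcS using fun i => (hp i).exists_mem_cut (hx i) (hy i)
  have c_injective : Function.Injective c := fun i j hij => by
    by_contra hne
    exact hdisj hne (c i) (hcp i) (hij ▸ hcp j)
  exact ENat.card_le_card_of_injective (f := fun i => (⟨c i, hcS i⟩ : G.cut S))
    fun i j hij => c_injective (congrArg Subtype.val hij)

/-- If `p` already uses the edge `e`, then it passes through `x`, and its part from `x` on is
the required ttrail. -/
lemma IsTtrail.exists_subset_cons {w : V} {e : E} (hp : G.IsTtrail w y p)
    (he : G.ends e = s(x, w)) :
    ∃ q ⊆ (x, e) :: p, G.IsTtrail x y q := by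
  by_cases hep : e ∈ p.map Prod.snd
  · obtain ⟨⟨a, e⟩, hmem, rfl⟩ := List.mem_map.1 hep
    obtain ⟨l, r, rfl⟩ := List.append_of_mem hmem
    obtain ⟨z, rfl, b, hab, hr⟩ := hp.1.of_append
    have suffix_nodup : (((a, e) :: r).map Prod.snd).Nodup :=
      hp.2.sublist ((List.sublist_append_right _ _).map _)
    rcases Sym2.eq_iff.1 (he.symm.trans hab) with ⟨rfl, rfl⟩ | ⟨rfl, rfl⟩
    · exact ⟨(x, e) :: r, by simp, ⟨rfl, w, hab, hr⟩, suffix_nodup⟩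
    · exact ⟨r, fun s hs => by simp [hs], hr, suffix_nodup.of_cons⟩
  · exact ⟨(x, e) :: p, List.Subset.refl _, ⟨rfl, w, he, hp.1⟩, List.nodup_cons.2 ⟨hep, hp.2⟩⟩

lemma exists_isTtrail_of_reflTransGen {P : V → E → Prop}
    (h : Relation.ReflTransGen (fun a b => ∃ e, G.ends e = s(a, b) ∧ P a e) x y) :
    ∃ p, G.IsTtrail x y p ∧ ∀ s ∈ p, P s.1 s.2 := by
  induction h using Relation.ReflTransGen.head_induction_on with
  | refl => exact ⟨[], ⟨rfl, List.nodup_nil⟩, by simp⟩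
  | head hab _ ih =>
    obtain ⟨e, he, hPe⟩ := hab
    obtain ⟨p, hp, hPp⟩ := ih
    obtain ⟨q, hqp, hq⟩ := hp.exists_subset_cons he
    refine ⟨q, hq, fun s hs => ?_⟩
    rcases List.mem_cons.1 (hqp hs) with rfl | hs
    exacts [hPe, hPp s hs]

lemma exists_isTtrail_or_exists_separating (G : Multigraph V E) (P : V → E → Prop) (x y : V) :
    (∃ p, G.IsTtrail x y p ∧ ∀ s ∈ p, P s.1 s.2) ∨
      ∃ S : Set V, x ∈ S ∧ y ∉ S ∧ ∀ a ∈ S, ∀ b ∉ S, ∀ e, G.ends e = s(a, b) → ¬ P a e := by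
  let R : V → V → Prop := fun a b => ∃ e, G.ends e = s(a, b) ∧ P a e
  by_cases h : Relation.ReflTransGen R x y
  · exact .inl (exists_isTtrail_of_reflTransGen h)
  · exact .inr ⟨{z | Relation.ReflTransGen R x z}, .refl, h,
      fun a ha b hb e he hPe => hb (ha.tail ⟨e, he, hPe⟩)⟩

end Chains

section Orientation

variable (G : Multigraph V E) {x y a b : V} {e : E} {S : Set V}

/-- The initial vertex of `e` in an arbitrary reference orientation of `G`. -/
noncomputable def tail (e : E) : V := (Quot.out (G.ends e)).1

/-- The final vertex of `e` in the reference orientation chosen by `Multigraph.tail`. -/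
noncomputable def head (e : E) : V := (Quot.out (G.ends e)).2

lemma ends_eq_tail_head (e : E) : G.ends e = s(G.tail e, G.head e) :=
  (Quot.out_eq (G.ends e)).symm

open Classical in
/-- The sign, relative to the reference orientation, of traversing the edge `e` starting at its
end `x`; loops are traversed positively. Junk value `-1` if `x` is not an end of `e`. -/
noncomputable def sign (x : V) (e : E) : ℤ := if x = G.tail e then 1 else -1

lemma sign_eq_one_or_neg_one (x : V) (e : E) : G.sign x e = 1 ∨ G.sign x e = -1 := by
  classical exact ite_eq_or_eq _ _ _

/-- The boundary of an integral chain of edges, each edge being sent to its tail minus its head: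
the net outflow at each vertex. -/
noncomputable def intBoundary : (E →₀ ℤ) →ₗ[ℤ] (V →₀ ℤ) :=
  Finsupp.linearCombination ℤ fun e => .single (G.tail e) 1 - .single (G.head e) 1

/-- The sign with which the edge `e` leaves the vertex set `S`: it is `1` if `e` is oriented out of
`S`, `-1` if it is oriented into `S`, and `0` if it does not cross the boundary of `S`. -/
noncomputable def cutSign (S : Set V) (e : E) : ℤ :=
  S.indicator 1 (G.tail e) - S.indicator 1 (G.head e)

variable {G}

lemma intBoundary_single_sign (he : G.ends e = s(x, y)) :
    G.intBoundary (.single e (G.sign x e)) = .single x 1 - .single y 1 := by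
  rw [intBoundary, Finsupp.linearCombination_single]
  rcases Sym2.eq_iff.1 (he.symm.trans (G.ends_eq_tail_head e)) with ⟨rfl, rfl⟩ | ⟨rfl, rfl⟩
  · simp [sign]
  · by_cases hloop : G.head e = G.tail e <;> simp [sign, hloop]

lemma cutSign_eq_sign (ha : a ∈ S) (hb : b ∉ S) (he : G.ends e = s(a, b)) :
    G.cutSign S e = G.sign a e := by
  have hab : a ≠ b := fun h => hb (h ▸ ha)
  rcases Sym2.eq_iff.1 (he.symm.trans (G.ends_eq_tail_head e)) with ⟨rfl, rfl⟩ | ⟨rfl, rfl⟩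
  · simp [cutSign, sign, ha, hb]
  · simp [cutSign, sign, ha, hb, hab]

lemma cutSign_eq_zero (he : e ∉ G.cut S) : G.cutSign S e = 0 := by
  have ends_mem_iff : G.tail e ∈ S ↔ G.head e ∈ S := by
    constructor <;> intro hin <;> by_contra hout
    · exact he ⟨_, hin, _, hout, G.ends_eq_tail_head e⟩
    · exact he ⟨_, hin, _, hout, (G.ends_eq_tail_head e).trans Sym2.eq_swap⟩
  by_cases ht : G.tail e ∈ S
  · simp [cutSign, ht, ends_mem_iff.1 ht]
  · simp [cutSign, ht, mt ends_mem_iff.2 ht]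

lemma linearCombination_indicator_intBoundary (S : Set V) (f : E →₀ ℤ) :
    Finsupp.linearCombination ℤ (S.indicator (1 : V → ℤ)) (G.intBoundary f) =
      f.sum fun e n => n * G.cutSign S e := by
  simp only [intBoundary, cutSign, Finsupp.linearCombination_apply ℤ f, map_finsuppSum, map_smul,
    map_sub, Finsupp.linearCombination_single, smul_eq_mul, one_mul]

end Orientation

section TrailFlow

variable (G : Multigraph V E) {x y : V} {p : List (V × E)} {e : E}

/-- The integral chain that sends one unit along `p`. -/
noncomputable def trailFlow (p : List (V × E)) : E →₀ ℤ :=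
  (p.map fun s => .single s.2 (G.sign s.1 s.2)).sum

lemma trailFlow_cons (s : V × E) (p : List (V × E)) :
    G.trailFlow (s :: p) = .single s.2 (G.sign s.1 s.2) + G.trailFlow p := by
  simp [trailFlow]

lemma trailFlow_apply_of_notMem (he : e ∉ p.map Prod.snd) : G.trailFlow p e = 0 := by
  induction p with
  | nil => simp [trailFlow]
  | cons s p ih =>
    obtain ⟨hes, hep⟩ := not_or.1 (mt List.mem_cons.2 he)
    simp [trailFlow_cons, ih hep, Finsupp.single_eq_of_ne hes]

variable {G}

lemma trailFlow_apply_of_mem (hp : (p.map Prod.snd).Nodup) {s : V × E} (hs : s ∈ p) :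
    G.trailFlow p s.2 = G.sign s.1 s.2 := by
  induction p with
  | nil => simp at hs
  | cons t p ih =>
    obtain ⟨htp, hp⟩ := List.nodup_cons.1 hp
    rw [trailFlow_cons, Finsupp.add_apply]
    rcases List.mem_cons.1 hs with rfl | hs
    · simp [G.trailFlow_apply_of_notMem htp]
    · have hst : s.2 ≠ t.2 := fun h => htp (h ▸ List.mem_map_of_mem hs)
      simp [ih hp hs, Finsupp.single_eq_of_ne hst]

lemma IsChain.intBoundary_trailFlow (hp : G.IsChain x y p) :
    G.intBoundary (G.trailFlow p) = .single x 1 - .single y 1 := by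
  induction p generalizing x with
  | nil =>
    obtain rfl : x = y := hp
    simp [trailFlow]
  | cons s p ih =>
    obtain ⟨a, e⟩ := s
    obtain ⟨rfl, w, he, hw⟩ := hp
    rw [trailFlow_cons, map_add, intBoundary_single_sign he, ih hw, sub_add_sub_cancel]

end TrailFlow

/-- `f` is an integral flow of value `m` from `x` to `y` in which every edge has capacity one, in
both directions. If `x = y`, then `f` is a circulation and `m` is arbitrary. -/
structure IsUnitFlow (G : Multigraph V E) (m : ℕ) (x y : V) (f : E →₀ ℤ) : Prop where
  abs_le_one : ∀ e, |f e| ≤ 1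
  intBoundary_eq : G.intBoundary f = (m : ℤ) • (.single x 1 - .single y 1)

section UnitFlow

variable {G : Multigraph V E} {k m : ℕ} {x y : V} {f : E →₀ ℤ} {p : List (V × E)} {S : Set V}

lemma isUnitFlow_zero (G : Multigraph V E) (x y : V) : G.IsUnitFlow 0 x y 0 where
  abs_le_one := by simp
  intBoundary_eq := by simp

namespace IsUnitFlow

lemma sum_mul_cutSign (hf : G.IsUnitFlow m x y f) (hx : x ∈ S) (hy : y ∉ S) :
    (f.sum fun e n => n * G.cutSign S e) = m := by
  rw [← linearCombination_indicator_intBoundary, hf.intBoundary_eq]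
  simp [hx, hy]

lemma encard_cut_eq_of_saturated (hf : G.IsUnitFlow m x y f) (hx : x ∈ S) (hy : y ∉ S)
    (hsat : ∀ a ∈ S, ∀ b ∉ S, ∀ e, G.ends e = s(a, b) → f e = G.sign a e) :
    (G.cut S).encard = m := by
  classical
  have mul_cutSign : ∀ e, f e * G.cutSign S e = if e ∈ G.cut S then 1 else 0 := fun e => by
    split_ifs with he
    · obtain ⟨a, ha, b, hb, hab⟩ := he
      rw [hsat a ha b hb e hab, cutSign_eq_sign ha hb hab]
      rcases G.sign_eq_one_or_neg_one a e with h | h <;> simp [h]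
    · rw [cutSign_eq_zero he, mul_zero]
  have cut_eq : G.cut S = ↑{e ∈ f.support | e ∈ G.cut S} := by
    ext e
    have support_of_cut : e ∈ G.cut S → f e ≠ 0 := fun he h0 => by
      simpa [h0, he] using mul_cutSign e
    simpa using support_of_cut
  have card_eq : (#{e ∈ f.support | e ∈ G.cut S} : ℤ) = m := by
    rw [← hf.sum_mul_cutSign hx hy, Finsupp.sum, Finset.sum_congr rfl fun e _ => mul_cutSign e,
      Finset.sum_boole]
  rw [cut_eq, Set.encard_coe_eq_coe_finsetCard]
  exact_mod_cast card_eq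

lemma add_trailFlow (hf : G.IsUnitFlow m x y f) (hp : G.IsTtrail x y p)
    (hres : ∀ s ∈ p, f s.2 ≠ G.sign s.1 s.2) :
    G.IsUnitFlow (m + 1) x y (f + G.trailFlow p) where
  abs_le_one e := by
    by_cases he : e ∈ p.map Prod.snd
    · obtain ⟨s, hs, rfl⟩ := List.mem_map.1 he
      have bound := abs_le.1 (hf.abs_le_one s.2)
      have residual := hres s hs
      rw [Finsupp.add_apply, trailFlow_apply_of_mem hp.2 hs, abs_le]
      rcases G.sign_eq_one_or_neg_one s.1 s.2 with h | h <;> rw [h] at residual ⊢ <;> lia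
    · simpa [G.trailFlow_apply_of_notMem he] using hf.abs_le_one e
  intBoundary_eq := by
    rw [map_add, hf.intBoundary_eq, hp.1.intBoundary_trailFlow,
      Nat.cast_succ, add_smul, one_smul]

lemma sub_trailFlow (hf : G.IsUnitFlow (m + 1) x y f) (hp : G.IsTtrail x y p)
    (halong : ∀ s ∈ p, f s.2 = G.sign s.1 s.2) : G.IsUnitFlow m x y (f - G.trailFlow p) where
  abs_le_one e := by
    by_cases he : e ∈ p.map Prod.snd
    · obtain ⟨s, hs, rfl⟩ := List.mem_map.1 he
      simp [trailFlow_apply_of_mem hp.2 hs, halong s hs]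
    · simpa [G.trailFlow_apply_of_notMem he] using hf.abs_le_one e
  intBoundary_eq := by
    rw [map_sub, hf.intBoundary_eq, hp.1.intBoundary_trailFlow,
      Nat.cast_succ, add_smul, one_smul, add_sub_cancel_right]

lemma exists_succ (hf : G.IsUnitFlow m x y f)
    (hcut : ∀ S : Set V, x ∈ S → y ∉ S → (m + 1 : ℕ) ≤ (G.cut S).encard) :
    ∃ g, G.IsUnitFlow (m + 1) x y g := by
  rcases G.exists_isTtrail_or_exists_separating (fun a e => f e ≠ G.sign a e) x y with
    ⟨p, hp, hres⟩ | ⟨S, hx, hy, hsat⟩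
  · exact ⟨_, hf.add_trailFlow hp hres⟩
  · have cut_card := hf.encard_cut_eq_of_saturated hx hy (by simpa only [not_not] using hsat)
    have cut_large := hcut S hx hy
    rw [cut_card, Nat.cast_le] at cut_large
    exact absurd cut_large (Nat.not_succ_le_self m)

lemma exists_isTtrail (hf : G.IsUnitFlow (m + 1) x y f) :
    ∃ p, G.IsTtrail x y p ∧ ∀ s ∈ p, f s.2 = G.sign s.1 s.2 := by
  refine (G.exists_isTtrail_or_exists_separating (fun a e => f e = G.sign a e) x y).resolve_right ?_
  rintro ⟨S, hx, hy, hback⟩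
  have outflow_nonpos : (f.sum fun e n => n * G.cutSign S e) ≤ 0 := by
    refine Finset.sum_nonpos fun e _ => ?_
    beta_reduce
    by_cases he : e ∈ G.cut S
    · obtain ⟨a, ha, b, hb, hab⟩ := he
      have bound := abs_le.1 (hf.abs_le_one e)
      have against := hback a ha b hb e hab
      rw [cutSign_eq_sign ha hb hab]
      rcases G.sign_eq_one_or_neg_one a e with h | h <;> rw [h] at against ⊢ <;> lia
    · rw [cutSign_eq_zero he, mul_zero]
  rw [hf.sum_mul_cutSign hx hy] at outflow_nonpos
  lia

theorem exists_edgeDisjoint_isTtrail (hf : G.IsUnitFlow m x y f) :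
    ∃ p : Fin m → List (V × E), (∀ i, G.IsTtrail x y (p i)) ∧
      (Pairwise fun i j => EdgeDisjoint (p i) (p j)) ∧ ∀ i, ∀ e ∈ (p i).map Prod.snd, f e ≠ 0 := by
  induction m generalizing f with
  | zero => exact ⟨Fin.elim0, fun i => i.elim0, fun i => i.elim0, fun i => i.elim0⟩
  | succ m ih =>
    obtain ⟨q, hq, halong⟩ := hf.exists_isTtrail
    obtain ⟨p, hp, hdisj, hsupp⟩ := ih (hf.sub_trailFlow hq halong)
    have f_ne_zero_on_q : ∀ e ∈ q.map Prod.snd, f e ≠ 0 := fun e he => by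
      obtain ⟨s, hs, rfl⟩ := List.mem_map.1 he
      rw [halong s hs]
      rcases G.sign_eq_one_or_neg_one s.1 s.2 with h | h <;> simp [h]
    have p_disjoint_q : ∀ i, EdgeDisjoint (p i) q := fun i e hep heq => by
      obtain ⟨s, hs, rfl⟩ := List.mem_map.1 heq
      exact hsupp i s.2 hep (by simp [trailFlow_apply_of_mem hq.2 hs, halong s hs])
    have f_ne_zero_on_p : ∀ i, ∀ e ∈ (p i).map Prod.snd, f e ≠ 0 := fun i e he => by
      simpa [G.trailFlow_apply_of_notMem (p_disjoint_q i e he)] using hsupp i e he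
    refine ⟨Fin.cons q p, Fin.forall_fin_succ.2 ⟨hq, hp⟩, pairwise_fin_succ_iff.2 ⟨?_, ?_, hdisj⟩,
      Fin.forall_fin_succ.2 ⟨f_ne_zero_on_q, f_ne_zero_on_p⟩⟩
    · exact fun i => p_disjoint_q i
    · exact fun i e heq hep => p_disjoint_q i e hep heq

end IsUnitFlow

lemma exists_isUnitFlow (hcut : ∀ S : Set V, x ∈ S → y ∉ S → k ≤ (G.cut S).encard) :
    ∃ f, G.IsUnitFlow k x y f := by
  induction k with
  | zero => exact ⟨0, G.isUnitFlow_zero x y⟩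
  | succ k ih =>
    obtain ⟨f, hf⟩ := ih fun S hx hy => le_trans (by simp) (hcut S hx hy)
    exact hf.exists_succ hcut

theorem kConn_iff_forall_le_encard_cut :
    G.KConn k x y ↔ ∀ S : Set V, x ∈ S → y ∉ S → k ≤ (G.cut S).encard := by
  constructor
  · rintro (rfl | ⟨p, hp, hdisj⟩) S hx hy
    · exact absurd hx hy
    · simpa using card_le_encard_cut (fun i => (hp i).1) hdisj (fun _ => hx) (fun _ => hy)
  · intro hcut
    obtain ⟨f, hf⟩ := exists_isUnitFlow hcut
    obtain ⟨p, hp, hdisj, -⟩ := hf.exists_edgeDisjoint_isTtrail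
    exact .inr ⟨p, hp, fun _ _ hij => hdisj hij⟩

end UnitFlow

theorem stmt7_general (G : Multigraph V E) {k : ℕ} {v : Fin k → V} {w : V}
    (hvw : ∀ i, G.KConn k (v i) w) {u : V} {p : Fin k → List (V × E)}
    (hp : ∀ i, G.IsTtrail u (v i) (p i)) (hdisj : Pairwise fun i j => EdgeDisjoint (p i) (p j)) :
    G.KConn k u w := by
  refine kConn_iff_forall_le_encard_cut.2 fun S hu hw => ?_
  by_cases hvS : ∃ i, v i ∈ S
  · obtain ⟨i, hi⟩ := hvS
    exact kConn_iff_forall_le_encard_cut.1 (hvw i) S hi hw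
  · simpa using card_le_encard_cut (fun i => (hp i).1) hdisj (fun _ => hu) (not_exists.1 hvS)

end EdgeMenger

theorem stmt7 (G : Multigraph V E) (k : ℕ) (hk : 0 < k) (v : Fin k → V)
    (hsame : ∀ i j, G.KConn k (v i) (v j)) (u : V)
    (p : Fin k → List (V × E)) (hp : ∀ i, G.IsTtrail u (v i) (p i))
    (hdisj : ∀ i j, i ≠ j → EdgeDisjoint (p i) (p j)) :
    G.KConn k u (v ⟨0, hk⟩) := by
  exact G.stmt7_general (fun i => hsame i ⟨0, hk⟩) hp fun i j => hdisj i j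

end Multigraph
end

section
/- Let G be a finite undirected multigraph. Every non-trivial 3-weakly closed ttrail c of G can be written as a concatenation c₁+...+cₘ of non-trivial short 3-weakly closed ttrails c₁,...,cₘ, and this decomposition is unique. -/
open Finset

namespace Multigraph

variable {V E : Type*} [Fintype V] [Fintype E] [DecidableEq V] [DecidableEq E]


/-!
Everything rests on the fact that `k`-edge-connectivity is transitive. Given `k` edge-disjoint
trails `P i` from `x` to `y` and `k` edge-disjoint trails `Q j` from `z` to `y`, let each `P i` and
each `Q j` prefer the edges it traverses earlier. A stable matching between the two families is a
set `S` of common edges, at most one per trail. Follow `P i` up to its edge in `S`, then go back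
along the `Q j` containing that edge; unmatched trails are paired arbitrarily and joined at `y`.
Stability says precisely that the resulting walks from `x` to `z` share no edge.

Given transitivity, a weakly closed trail that is not short can be cut at an inner vertex equivalent
to its ends into two shorter weakly closed trails. For uniqueness, of two nontrivial short trails
starting a common trail neither can be a proper prefix of the other, since the end of the shorter
one would be a forbidden inner vertex of the longer one.
-/

section StableSet

variable {α ι κ : Type*}

lemma exists_minimal_of_wellFounded {r : α → α → Prop} [IsTrans α r] (hr : WellFounded r)
    {X : Set α} {a : α} (ha : a ∈ X) :
    ∃ b ∈ X, (b = a ∨ r b a) ∧ b ∈ upperPolar rᶜ X := by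
  induction a using hr.induction with
  | _ a ih =>
    by_cases hmin : a ∈ upperPolar rᶜ X
    · exact ⟨a, ha, .inl rfl, hmin⟩
    · obtain ⟨c, hc, hca⟩ : ∃ c ∈ X, r c a := by
        simpa [mem_upperPolar_iff] using hmin
      obtain ⟨b, hb, hbc, hbmin⟩ := ih c hca hc
      exact ⟨b, hb, .inr (hbc.elim (· ▸ hca) fun h ↦ _root_.trans h hca), hbmin⟩

/-- This is a case of a theorem of Sands, Sauer and Woodrow. As `upperPolar rᶜ X` is the set of
points without an `r`-predecessor in `X`, Knaster–Tarski provides `X` and `Y` with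
`X = upperPolar r₂ᶜ Y` and `Y = upperPolar r₁ᶜ X`; take `S = X ∩ Y`. -/
theorem exists_antichain_dominating {r₁ r₂ : α → α → Prop} [IsTrans α r₁] [IsTrans α r₂]
    (hr₁ : WellFounded r₁) (hr₂ : WellFounded r₂) :
    ∃ S : Set α, IsAntichain r₁ S ∧ IsAntichain r₂ S ∧
      ∀ a, ∃ s ∈ S, s = a ∨ r₁ s a ∨ r₂ s a := by
  let F : Set α →o Set α :=
    ⟨upperPolar r₂ᶜ ∘ upperPolar r₁ᶜ, (upperPolar_anti _).comp (upperPolar_anti _)⟩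
  obtain ⟨X, hX⟩ : ∃ X, upperPolar r₂ᶜ (upperPolar r₁ᶜ X) = X := ⟨F.lfp, F.map_lfp⟩
  set Y := upperPolar r₁ᶜ X
  refine ⟨X ∩ Y, fun s hs t ht _ ↦ ht.2 hs.1, fun s hs t ht _ ↦ ?_, fun a ↦ ?_⟩
  · exact (hX.symm ▸ ht.1 : t ∈ upperPolar r₂ᶜ Y) hs.2
  by_cases ha : a ∈ X
  · obtain ⟨b, hbX, hba, hbY⟩ := exists_minimal_of_wellFounded hr₁ ha
    exact ⟨b, ⟨hbX, hbY⟩, hba.imp_right .inl⟩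
  · obtain ⟨c, hcY, hca⟩ : ∃ c ∈ Y, r₂ c a := by
      rw [← hX] at ha
      simpa [mem_upperPolar_iff] using ha
    obtain ⟨b, hbY, hbc, hbX⟩ := exists_minimal_of_wellFounded hr₂ hcY
    exact ⟨b, ⟨hX ▸ hbX, hbY⟩, .inr (.inr (hbc.elim (· ▸ hca) fun h ↦ _root_.trans h hca))⟩

lemma rank_eq_of_isAntichain {f : α → ι} {ρ : α → ℕ} {S : Set α}
    (hS : IsAntichain (fun a b ↦ f a = f b ∧ ρ a < ρ b) S) {s t : α} (hs : s ∈ S) (ht : t ∈ S)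
    (hst : f s = f t) : ρ s = ρ t := by
  by_contra hρ
  have hne : s ≠ t := fun h ↦ hρ (congrArg ρ h)
  rcases lt_or_gt_of_ne hρ with h | h
  · exact hS hs ht hne ⟨hst, h⟩
  · exact hS ht hs hne.symm ⟨hst.symm, h⟩

lemma exists_stable_set (f : α → ι) (g : α → κ) (ρ τ : α → ℕ) :
    ∃ S : Set α, (∀ s ∈ S, ∀ t ∈ S, f s = f t → ρ s = ρ t) ∧
      (∀ s ∈ S, ∀ t ∈ S, g s = g t → τ s = τ t) ∧
      ∀ a, (∃ s ∈ S, f s = f a ∧ ρ s ≤ ρ a) ∨ ∃ s ∈ S, g s = g a ∧ τ s ≤ τ a := by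
  let r₁ (a b : α) : Prop := f a = f b ∧ ρ a < ρ b
  let r₂ (a b : α) : Prop := g a = g b ∧ τ a < τ b
  have : IsTrans α r₁ := ⟨fun _ _ _ h h' ↦ ⟨h.1.trans h'.1, h.2.trans h'.2⟩⟩
  have : IsTrans α r₂ := ⟨fun _ _ _ h h' ↦ ⟨h.1.trans h'.1, h.2.trans h'.2⟩⟩
  have hr₁ : WellFounded r₁ := Subrelation.wf And.right (measure ρ).wf
  have hr₂ : WellFounded r₂ := Subrelation.wf And.right (measure τ).wf
  obtain ⟨S, hS₁, hS₂, hdom⟩ := exists_antichain_dominating hr₁ hr₂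
  refine ⟨S, fun s hs t ht hst ↦ ?_, fun s hs t ht hst ↦ ?_, fun a ↦ ?_⟩
  · exact rank_eq_of_isAntichain hS₁ hs ht hst
  · exact rank_eq_of_isAntichain hS₂ hs ht hst
  · obtain ⟨s, hs, rfl | h | h⟩ := hdom a
    · exact .inl ⟨s, hs, rfl, le_rfl⟩
    · exact .inl ⟨s, hs, h.1, h.2.le⟩
    · exact .inr ⟨s, hs, h.1, h.2.le⟩

end StableSet

section StableMatching

variable {α ι : Type*}

lemma exists_perm_apply_eq [Finite ι] {f g : α → ι} (hf : f.Injective) (hg : g.Injective) :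
    ∃ σ : Equiv.Perm ι, ∀ a, σ (f a) = g a := by
  classical
  have := Fintype.ofFinite ι
  let e : Set.range f ≃ Set.range g :=
    (Equiv.ofInjective f hf).symm.trans (Equiv.ofInjective g hg)
  refine ⟨Equiv.extendSubtype e, fun a ↦ ?_⟩
  rw [Equiv.extendSubtype_apply_of_mem e (f a) ⟨a, rfl⟩]
  simp [e, Equiv.ofInjective_symm_apply]

variable [DecidableEq α]

/-- A stable matching between two families of lists, each list preferring its earlier entries: a
set `S` of common entries, at most one in each list, such that no common entry of `P i` and `Q j`
comes strictly before the elements of `S` in both lists. -/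
structure IsStableMatching (P Q : ι → List α) (S : Set α) : Prop where
  exists_mem_left : ∀ s ∈ S, ∃ i, s ∈ P i
  exists_mem_right : ∀ s ∈ S, ∃ j, s ∈ Q j
  left_unique : ∀ i, ∀ s ∈ S, ∀ t ∈ S, s ∈ P i → t ∈ P i → s = t
  right_unique : ∀ j, ∀ s ∈ S, ∀ t ∈ S, s ∈ Q j → t ∈ Q j → s = t
  stable : ∀ i j, ∀ a ∈ P i, a ∈ Q j →
    (∃ s ∈ S, s ∈ P i ∧ (P i).idxOf s ≤ (P i).idxOf a) ∨
      ∃ s ∈ S, s ∈ Q j ∧ (Q j).idxOf s ≤ (Q j).idxOf a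

/-- The entries of `l` up to and including the first one in `S`; all entries of `l` if it does not
meet `S`. -/
def initialPart (l : List α) (S : Set α) : Set α :=
  {a | a ∈ l ∧ ∀ s ∈ S, s ∈ l → l.idxOf a ≤ l.idxOf s}

variable {P Q : ι → List α} {S : Set α}

theorem exists_isStableMatching (hP : Pairwise (Function.onFun List.Disjoint P))
    (hQ : Pairwise (Function.onFun List.Disjoint Q)) : ∃ S, IsStableMatching P Q S := by
  let M : Set α := {a | (∃ i, a ∈ P i) ∧ ∃ j, a ∈ Q j}
  choose f hf using fun a : M ↦ a.2.1
  choose g hg using fun a : M ↦ a.2.2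
  have f_eq (a : M) {i : ι} (h : a.1 ∈ P i) : f a = i := hP.eq fun hd ↦ hd (hf a) h
  have g_eq (a : M) {j : ι} (h : a.1 ∈ Q j) : g a = j := hQ.eq fun hd ↦ hd (hg a) h
  obtain ⟨S, hSf, hSg, hdom⟩ := exists_stable_set f g
    (fun a ↦ (P (f a)).idxOf a.1) (fun a ↦ (Q (g a)).idxOf a.1)
  refine ⟨(↑) '' S, ?_, ?_, ?_, ?_, ?_⟩
  · rintro _ ⟨s, -, rfl⟩
    exact s.2.1
  · rintro _ ⟨s, -, rfl⟩
    exact s.2.2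
  · rintro i _ ⟨s, hs, rfl⟩ _ ⟨t, ht, rfl⟩ hsi hti
    obtain rfl := f_eq s hsi
    have hidx := hSf s hs t ht (f_eq t hti).symm
    rw [f_eq t hti] at hidx
    exact (List.idxOf_inj hsi).mp hidx
  · rintro j _ ⟨s, hs, rfl⟩ _ ⟨t, ht, rfl⟩ hsj htj
    obtain rfl := g_eq s hsj
    have hidx := hSg s hs t ht (g_eq t htj).symm
    rw [g_eq t htj] at hidx
    exact (List.idxOf_inj hsj).mp hidx
  · intro i j a hai haj
    let a' : M := ⟨a, ⟨i, hai⟩, j, haj⟩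
    have hfa : f a' = i := f_eq a' hai
    have hga : g a' = j := g_eq a' haj
    refine (hdom a').imp ?_ ?_
    · rintro ⟨s, hs, hsa, hle⟩
      rw [hsa, hfa] at hle
      exact ⟨s, ⟨s, hs, rfl⟩, hfa ▸ hsa ▸ hf s, hle⟩
    · rintro ⟨s, hs, hsa, hle⟩
      rw [hsa, hga] at hle
      exact ⟨s, ⟨s, hs, rfl⟩, hga ▸ hsa ▸ hg s, hle⟩

namespace IsStableMatching

lemma exists_perm [Finite ι] (h : IsStableMatching P Q S)
    (hP : Pairwise (Function.onFun List.Disjoint P))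
    (hQ : Pairwise (Function.onFun List.Disjoint Q)) :
    ∃ σ : Equiv.Perm ι, ∀ s ∈ S, ∀ i, s ∈ P i ↔ s ∈ Q (σ i) := by
  choose f hf using fun s : S ↦ h.exists_mem_left s s.2
  choose g hg using fun s : S ↦ h.exists_mem_right s s.2
  have hf_inj : f.Injective := fun s t hst ↦
    Subtype.ext (h.left_unique _ s s.2 t t.2 (hf s) (hst ▸ hf t))
  have hg_inj : g.Injective := fun s t hst ↦
    Subtype.ext (h.right_unique _ s s.2 t t.2 (hg s) (hst ▸ hg t))
  obtain ⟨σ, hσ⟩ := exists_perm_apply_eq hf_inj hg_inj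
  refine ⟨σ, fun s hs i ↦ ⟨fun hsi ↦ ?_, fun hsi ↦ ?_⟩⟩
  · obtain rfl : f ⟨s, hs⟩ = i := hP.eq fun hd ↦ hd (hf ⟨s, hs⟩) hsi
    exact hσ ⟨s, hs⟩ ▸ hg ⟨s, hs⟩
  · have hgi : g ⟨s, hs⟩ = σ i := hQ.eq fun hd ↦ hd (hg ⟨s, hs⟩) hsi
    obtain rfl : f ⟨s, hs⟩ = i := σ.injective ((hσ _).trans hgi)
    exact hf ⟨s, hs⟩

lemma mem_of_mem_initialPart (h : IsStableMatching P Q S) {i j : ι} {a : α}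
    (hi : a ∈ initialPart (P i) S) (hj : a ∈ initialPart (Q j) S) : a ∈ S := by
  rcases h.stable i j a hi.1 hj.1 with ⟨s, hs, hsi, hle⟩ | ⟨s, hs, hsj, hle⟩
  · exact (List.idxOf_inj hi.1).mp (le_antisymm (hi.2 s hs hsi) hle) ▸ hs
  · exact (List.idxOf_inj hj.1).mp (le_antisymm (hj.2 s hs hsj) hle) ▸ hs

lemma pairwise_disjoint_initialPart (h : IsStableMatching P Q S)
    (hP : Pairwise (Function.onFun List.Disjoint P))
    (hQ : Pairwise (Function.onFun List.Disjoint Q)) {σ : Equiv.Perm ι}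
    (hσ : ∀ s ∈ S, ∀ i, s ∈ P i ↔ s ∈ Q (σ i)) :
    Pairwise (Function.onFun Disjoint
      fun i ↦ initialPart (P i) S ∪ initialPart (Q (σ i)) S) := by
  have cross {i j : ι} {a : α} (hi : a ∈ initialPart (P i) S)
      (hj : a ∈ initialPart (Q (σ j)) S) : i = j :=
    hP.eq fun hd ↦ hd hi.1 ((hσ a (h.mem_of_mem_initialPart hi hj) j).mpr hj.1)
  intro i j hij
  refine Set.disjoint_left.mpr ?_
  rintro a (hi | hi) (hj | hj)
  · exact hP hij hi.1 hj.1
  · exact hij (cross hi hj)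
  · exact hij (cross hj hi).symm
  · exact hQ (σ.injective.ne hij) hi.1 hj.1

end IsStableMatching

end StableMatching

section Reachability

variable {V E : Type*} {G : Multigraph V E} {U U' : Set E} {a b u v w x y z : V} {e : E}
  {p q : List (V × E)} {k : ℕ}

/-- `G.ReachableWithin U a b` : some walk from `a` to `b` uses only edges in `U`. Unlike for
ttrails, edges may be repeated, so that such walks can be reversed and concatenated freely. -/
def ReachableWithin (G : Multigraph V E) (U : Set E) : V → V → Prop :=
  Relation.ReflTransGen fun a b ↦ ∃ e ∈ U, G.ends e = s(a, b)

lemma ReachableWithin.symm (h : G.ReachableWithin U a b) : G.ReachableWithin U b a := by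
  have : Std.Symm fun a b ↦ ∃ e ∈ U, G.ends e = s(a, b) :=
    ⟨fun _ _ ⟨e, he, hab⟩ ↦ ⟨e, he, hab.trans Sym2.eq_swap⟩⟩
  exact Relation.ReflTransGen.stdSymm.symm _ _ h

lemma ReachableWithin.mono (hU : U ⊆ U') (h : G.ReachableWithin U a b) :
    G.ReachableWithin U' a b :=
  Relation.ReflTransGen.mono (fun _ _ ⟨e, he, hab⟩ ↦ ⟨e, hU he, hab⟩) _ _ h

lemma isChain_append : G.IsChain a b (p ++ q) ↔ ∃ z, G.IsChain a z p ∧ G.IsChain z b q := by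
  induction p generalizing a with
  | nil => simp [IsChain]
  | cons d p ih =>
    simp only [List.cons_append, IsChain, ih]
    tauto

lemma IsChain.end_unique (h : G.IsChain a b p) (h' : G.IsChain a w p) : b = w := by
  induction p generalizing a with
  | nil => exact h.symm.trans h'
  | cons d p ih =>
    obtain ⟨-, u, hu, h⟩ := h
    obtain ⟨-, u', hu', h'⟩ := h'
    obtain rfl : u = u' := Sym2.congr_right.mp (hu.symm.trans hu')
    exact ih h h'

lemma IsTtrail.exists_of_append (h : G.IsTtrail a b (p ++ q)) :
    ∃ z, G.IsTtrail a z p ∧ G.IsTtrail z b q := by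
  obtain ⟨hchain, hnodup⟩ := h
  obtain ⟨z, hp, hq⟩ := isChain_append.mp hchain
  rw [List.map_append] at hnodup
  exact ⟨z, ⟨hp, hnodup.of_append_left⟩, hq, hnodup.of_append_right⟩

lemma IsTtrail.exists_suffix (hp : G.IsTtrail a b p) (he : e ∈ p.map Prod.snd)
    (hu : u ∈ G.ends e) : ∃ q, q <:+ p ∧ G.IsTtrail u b q := by
  induction p generalizing a with
  | nil => simp at he
  | cons d p ih =>
    obtain ⟨⟨hd, w, hw, hchain⟩, hnodup⟩ := id hp
    have hp' : G.IsTtrail w b p := ⟨hchain, hnodup.of_cons⟩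
    rcases List.mem_cons.mp he with rfl | he
    · rw [hw, Sym2.mem_iff] at hu
      rcases hu with rfl | rfl
      · exact ⟨_, List.suffix_rfl, hp⟩
      · exact ⟨p, List.suffix_cons d p, hp'⟩
    · obtain ⟨q, hq, hq'⟩ := ih hp' he
      exact ⟨q, hq.trans (List.suffix_cons d p), hq'⟩

lemma ReachableWithin.exists_isTtrail (h : G.ReachableWithin U a b) :
    ∃ p, G.IsTtrail a b p ∧ ∀ e ∈ p.map Prod.snd, e ∈ U := by
  induction h using Relation.ReflTransGen.head_induction_on with
  | refl => exact ⟨[], ⟨rfl, List.nodup_nil⟩, by simp⟩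
  | @head a w step _ ih =>
    obtain ⟨e, heU, he⟩ := step
    obtain ⟨q, hq, hqU⟩ := ih
    by_cases heq : e ∈ q.map Prod.snd
    · obtain ⟨r, hr, hr'⟩ := hq.exists_suffix heq (he ▸ Sym2.mem_mk_left a w)
      exact ⟨r, hr', fun f hf ↦ hqU f ((hr.map Prod.snd).subset hf)⟩
    · exact ⟨(a, e) :: q, ⟨⟨rfl, w, he, hq.1⟩, List.nodup_cons.mpr ⟨heq, hq.2⟩⟩,
        List.forall_mem_cons.mpr ⟨heU, hqU⟩⟩

lemma IsChain.reachableWithin (h : G.IsChain a b p) :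
    G.ReachableWithin {e | e ∈ p.map Prod.snd} a b := by
  induction p generalizing a with
  | nil => exact h ▸ Relation.ReflTransGen.refl
  | cons d p ih =>
    obtain ⟨-, w, hw, h⟩ := h
    exact .head ⟨d.2, List.mem_cons_self, hw⟩ ((ih h).mono fun _ ↦ List.mem_cons_of_mem _)

lemma IsChain.reachableWithin_idxOf_le [DecidableEq E] (h : G.IsChain a b p)
    (he : e ∈ p.map Prod.snd) (hu : u ∈ G.ends e) :
    G.ReachableWithin
      {f | f ∈ p.map Prod.snd ∧ (p.map Prod.snd).idxOf f ≤ (p.map Prod.snd).idxOf e} a u := by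
  induction p generalizing a with
  | nil => simp at he
  | cons d p ih =>
    obtain ⟨-, w, hw, h⟩ := h
    have first_step : ∃ f ∈ {f | f ∈ (d :: p).map Prod.snd ∧
        ((d :: p).map Prod.snd).idxOf f ≤ ((d :: p).map Prod.snd).idxOf e},
        G.ends f = s(a, w) := ⟨d.2, by simp, hw⟩
    by_cases hed : e = d.2
    · rw [hed, hw, Sym2.mem_iff] at hu
      rcases hu with rfl | rfl
      · exact .refl
      · exact .single first_step
    · have hep : e ∈ p.map Prod.snd := (List.mem_cons.mp he).resolve_left hed
      refine .head first_step ((ih h hep).mono ?_)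
      rintro f ⟨hf, hle⟩
      refine ⟨List.mem_cons_of_mem _ hf, ?_⟩
      simp only [List.map_cons, List.idxOf_cons]
      grind

lemma kConn_iff_exists_reachableWithin : G.KConn k v w ↔
    v = w ∨ ∃ U : Fin k → Set E, (∀ i, G.ReachableWithin (U i) v w) ∧
      Pairwise (Function.onFun Disjoint U) := by
  refine or_congr_right ⟨?_, ?_⟩
  · rintro ⟨p, hp, hdisj⟩
    exact ⟨fun i ↦ {e | e ∈ (p i).map Prod.snd}, fun i ↦ (hp i).1.reachableWithin,
      fun i j hij ↦ Set.disjoint_left.mpr (hdisj i j hij)⟩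
  · rintro ⟨U, hU, hdisj⟩
    choose p hp hpU using fun i ↦ (hU i).exists_isTtrail
    exact ⟨p, hp, fun i j hij e hi hj ↦
      Set.disjoint_left.mp (hdisj hij) (hpU i e hi) (hpU j e hj)⟩

lemma KConn.symm (h : G.KConn k v w) : G.KConn k w v := by
  rw [kConn_iff_exists_reachableWithin] at h ⊢
  exact h.imp Eq.symm fun ⟨U, hU, hdisj⟩ ↦ ⟨U, fun i ↦ (hU i).symm, hdisj⟩

lemma IsChain.reachableWithin_initialPart_union [DecidableEq E] {S : Set E}
    (hp : G.IsChain x y p) (hq : G.IsChain z y q)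
    (hSp : ∀ s ∈ S, ∀ t ∈ S, s ∈ p.map Prod.snd → t ∈ p.map Prod.snd → s = t)
    (hS : ∀ s ∈ S, s ∈ p.map Prod.snd ↔ s ∈ q.map Prod.snd) :
    G.ReachableWithin
      (initialPart (p.map Prod.snd) S ∪ initialPart (q.map Prod.snd) S) x z := by
  by_cases hmeet : ∃ s ∈ S, s ∈ p.map Prod.snd
  · obtain ⟨s, hs, hsp⟩ := hmeet
    have hsq := (hS s hs).mp hsp
    have hs_unique {t : E} (ht : t ∈ S) (htp : t ∈ p.map Prod.snd) : t = s :=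
      hSp t ht s hs htp hsp
    have hu := (G.ends s).out_fst_mem
    have from_x := (hp.reachableWithin_idxOf_le hsp hu).mono
      (U' := initialPart (p.map Prod.snd) S)
      fun f hf ↦ ⟨hf.1, fun t ht htp ↦ hs_unique ht htp ▸ hf.2⟩
    have from_z := (hq.reachableWithin_idxOf_le hsq hu).mono
      (U' := initialPart (q.map Prod.snd) S)
      fun f hf ↦ ⟨hf.1, fun t ht htq ↦ hs_unique ht ((hS t ht).mpr htq) ▸ hf.2⟩
    exact (from_x.mono Set.subset_union_left).trans (from_z.mono Set.subset_union_right).symm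
  · have from_x := hp.reachableWithin.mono (U' := initialPart (p.map Prod.snd) S)
      fun f hf ↦ ⟨hf, fun s hs hsp ↦ (hmeet ⟨s, hs, hsp⟩).elim⟩
    have from_z := hq.reachableWithin.mono (U' := initialPart (q.map Prod.snd) S)
      fun f hf ↦ ⟨hf, fun s hs hsq ↦ (hmeet ⟨s, hs, (hS s hs).mpr hsq⟩).elim⟩
    exact (from_x.mono Set.subset_union_left).trans (from_z.mono Set.subset_union_right).symm

theorem KConn.trans (hxy : G.KConn k x y) (hyz : G.KConn k y z) : G.KConn k x z := by
  classical
  rcases hxy with rfl | ⟨P, hP, hPdisj⟩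
  · exact hyz
  rcases hyz.symm with rfl | ⟨Q, hQ, hQdisj⟩
  · exact .inr ⟨P, hP, hPdisj⟩
  have hP' : Pairwise (Function.onFun List.Disjoint fun i ↦ (P i).map Prod.snd) :=
    fun i j hij e ↦ hPdisj i j hij e
  have hQ' : Pairwise (Function.onFun List.Disjoint fun i ↦ (Q i).map Prod.snd) :=
    fun i j hij e ↦ hQdisj i j hij e
  obtain ⟨S, hS⟩ := exists_isStableMatching hP' hQ'
  obtain ⟨σ, hσ⟩ := hS.exists_perm hP' hQ'
  refine kConn_iff_exists_reachableWithin.mpr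
    (.inr ⟨_, fun i ↦ ?_, hS.pairwise_disjoint_initialPart hP' hQ' hσ⟩)
  exact (hP i).1.reachableWithin_initialPart_union (hQ (σ i)).1 (hS.left_unique i)
    fun s hs ↦ hσ s hs i

end Reachability

section ShortDecomposition

variable {V E : Type*} {G : Multigraph V E} {v x y z z' : V} {c s r : List (V × E)}
  {L L' : List (List (V × E))}

lemma IsTtrail.exists_split_at_inner_vertex (hc : G.IsTtrail x y c)
    (hv : v ∈ (c.map Prod.fst).tail) :
    ∃ p q, c = p ++ q ∧ p ≠ [] ∧ q ≠ [] ∧ G.IsTtrail x v p ∧ G.IsTtrail v y q := by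
  rcases c with _ | ⟨d, c⟩
  · simp at hv
  obtain ⟨⟨u, e⟩, hmem, rfl⟩ := List.mem_map.mp hv
  obtain ⟨p, q, rfl⟩ := List.append_of_mem hmem
  rw [← List.cons_append] at hc
  obtain ⟨w, hp, hq⟩ := hc.exists_of_append
  obtain rfl : u = w := hq.1.1
  exact ⟨d :: p, (u, e) :: q, rfl, List.cons_ne_nil _ _, List.cons_ne_nil _ _, hp, hq⟩

lemma ShortChain.append (hL : G.ShortChain x y L) (hL' : G.ShortChain y z L') :
    G.ShortChain x z (L ++ L') := by
  induction L generalizing x with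
  | nil => exact hL ▸ hL'
  | cons s L ih =>
    obtain ⟨hs, w, hsw, hL⟩ := hL
    exact ⟨hs, w, hsw, ih hL⟩

theorem exists_shortChain_flatten_eq (hc : G.IsTtrail x y c) (hxy : G.KConn 3 x y) :
    ∃ L : List (List (V × E)), L.flatten = c ∧ G.ShortChain x y L := by
  induction hn : c.length using Nat.strong_induction_on generalizing x y c with
  | _ n ih =>
    subst hn
    by_cases hshort : ∀ v ∈ (c.map Prod.fst).tail, ¬ G.KConn 3 v x
    · rcases eq_or_ne c [] with rfl | hne
      · exact ⟨[], rfl, hc.1⟩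
      · exact ⟨[c], List.flatten_singleton, hne, y, ⟨hc, hxy, hshort⟩, rfl⟩
    · push Not at hshort
      obtain ⟨v, hv, hvx⟩ := hshort
      obtain ⟨p, q, rfl, hp, hq, hxv, hvy⟩ := hc.exists_split_at_inner_vertex hv
      have hp_pos := List.length_pos_iff.mpr hp
      have hq_pos := List.length_pos_iff.mpr hq
      obtain ⟨L, rfl, hL⟩ := ih _ (by rw [List.length_append]; lia) hxv hvx.symm rfl
      obtain ⟨L', rfl, hL'⟩ := ih _ (by rw [List.length_append]; lia) hvy (hvx.trans hxy) rfl
      exact ⟨L ++ L', List.flatten_append, hL.append hL'⟩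

lemma ShortW.eq_nil_of_append (hs : G.ShortW x z s) (hne : s ≠ [])
    (hsr : G.ShortW x z' (s ++ r)) : r = [] := by
  obtain ⟨w, hsw, hr⟩ := isChain_append.mp hsr.1.1
  obtain rfl := hsw.end_unique hs.1.1
  rcases s with _ | ⟨d, s⟩
  · contradiction
  rcases r with _ | ⟨⟨u, e⟩, r⟩
  · rfl
  obtain rfl : u = w := hr.1
  exact absurd hs.2.1.symm (hsr.2.2 u (by simp))

lemma ShortW.eq_of_append_eq_append {s' r' : List (V × E)} (hs : G.ShortW x z s)
    (hs' : G.ShortW x z' s') (hne : s ≠ []) (hne' : s' ≠ []) (h : s ++ r = s' ++ r') :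
    s = s' := by
  rcases List.append_eq_append_iff.mp h with ⟨t, rfl, -⟩ | ⟨t, rfl, -⟩
  · rw [hs.eq_nil_of_append hne hs', List.append_nil]
  · rw [hs'.eq_nil_of_append hne' hs, List.append_nil]

theorem ShortChain.eq_of_flatten_eq (hL : G.ShortChain x y L) (hL' : G.ShortChain x z L')
    (h : L.flatten = L'.flatten) : L = L' := by
  induction L generalizing x L' with
  | nil =>
    cases L' with
    | nil => rfl
    | cons s' L' => exact absurd (List.append_eq_nil_iff.mp h.symm).1 hL'.1
  | cons s L ih =>
    cases L' with
    | nil => exact absurd (List.append_eq_nil_iff.mp h).1 hL.1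
    | cons s' L' =>
      obtain ⟨hne, w, hs, hL⟩ := hL
      obtain ⟨hne', w', hs', hL'⟩ := hL'
      rw [List.flatten_cons, List.flatten_cons] at h
      obtain rfl := hs.eq_of_append_eq_append hs' hne hne' h
      obtain rfl := hs.1.1.end_unique hs'.1.1
      rw [ih hL hL' (List.append_cancel_left h)]

theorem stmt8_general (hc : G.IsTtrail x y c) (hxy : G.KConn 3 x y) :
    ∃! L : List (List (V × E)), L.flatten = c ∧ G.ShortChain x y L := by
  obtain ⟨L, hLc, hL⟩ := exists_shortChain_flatten_eq hc hxy
  exact ⟨L, ⟨hLc, hL⟩, fun _ ⟨hLc', hL'⟩ ↦ hL'.eq_of_flatten_eq hL (hLc'.trans hLc.symm)⟩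

end ShortDecomposition

theorem stmt8 (G : Multigraph V E) (x y : V) (c : List (V × E)) (hne : c ≠ [])
    (hc : G.IsTtrail x y c) (hxy : G.KConn 3 x y) :
    ∃! L : List (List (V × E)), L.flatten = c ∧ G.ShortChain x y L :=
  stmt8_general hc hxy

end Multigraph
end
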